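/- For every (k_1, k_2) \in \mathbb{Z}^2 with (k_1,k_2) \ne (0,0), the Fourier coefficient of the 2D potential V satisfies \hat V_{k_1,k_2} = (\pi/L^2) \big( (\pi R^3 \ell/(2 z^2)) [J_1(z)H_0(z) - J_0(z)H_1(z)] - (R^4/z^2) J_2(z) \big), where z = \pi R \sqrt{k_1^2 + k_2^2}/L. -/

import Mathlib

open Real MeasureTheory

/-- The 2D interaction potential: `V x = (|x| - ℓ)^2 - (R - ℓ)^2` for `|x| < R`, `0` otherwise,
where `|x| = √(x₁² + x₂²)` is the Euclidean norm. -/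
noncomputable def potV2 (R ℓ : ℝ) (x : ℝ × ℝ) : ℝ :=
  if Real.sqrt (x.1 ^ 2 + x.2 ^ 2) < R then
    (Real.sqrt (x.1 ^ 2 + x.2 ^ 2) - ℓ) ^ 2 - (R - ℓ) ^ 2
  else 0

/-- The `(k₁, k₂)`-th Fourier coefficient of `V` on the periodic square `[-L, L]²`. -/
noncomputable def Vhat2C (L R ℓ : ℝ) (k₁ k₂ : ℤ) : ℂ :=
  (1 / (2 * L)) ^ 2 *
    ∫ x in Set.Icc (-L) L ×ˢ Set.Icc (-L) L, (potV2 R ℓ x : ℂ) *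
      Complex.exp (-(Complex.I * (π : ℂ) * ((k₁ : ℂ) * (x.1 : ℂ) + (k₂ : ℂ) * (x.2 : ℂ)) /
        (L : ℂ)))

/-- The Bessel function of the first kind of order `i`. -/
noncomputable def besselJ (i : ℕ) (x : ℝ) : ℝ :=
  ∑' m : ℕ, ((-1 : ℝ) ^ m / (m.factorial * Real.Gamma (m + 1 + i))) * (x / 2) ^ (2 * m + i)

/-- The Struve function of order `i`. -/
noncomputable def struveH (i : ℕ) (x : ℝ) : ℝ :=
  ∑' m : ℕ, ((-1 : ℝ) ^ m / (Real.Gamma (m + 3 / 2) * Real.Gamma (m + i + 3 / 2))) *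
    (x / 2) ^ (2 * m + i + 1)

/-!
In polar coordinates the phase is `q r cos (θ - φ)` with `q = π |k| / L`, and the angular integral
of `exp (-i t cos θ)` is `2 π J₀(t)`, so the Fourier coefficient is the Hankel transform
`∫ (V r) r J₀(q r) dr` up to a constant. Since `r J₁(q r) / q` is a primitive of `r J₀(q r)` and `V`
vanishes at `r = R`, integration by parts leaves `-(2 / q) ∫ (r - ℓ) r J₁(q r) dr`. The part with
`r² J₁` integrates to `J₂`. The part with `r J₁` is where the Struve functions enter: since the
derivative of `H₀` is `2 / π - H₁`, that of `x (J₁ H₀ - J₀ H₁)` is `(2 / π) x J₁`.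
-/

/-- The coefficients `(-1)ᵐ / (Γ(m + α) Γ(m + β))` shared by the Bessel functions (`α = 1`) and the
Struve functions (`α = 3 / 2`). -/
noncomputable def besselStruveCoeff (α β : ℝ) (m : ℕ) : ℝ :=
  (-1) ^ m / (Gamma (m + α) * Gamma (m + β))

/-- The series `∑ₘ (-1)ᵐ / (Γ(m + α) Γ(m + β)) (x / 2) ^ (2 m + k)`. Keeping `k` independent of `β`
makes the family stable under multiplication by powers of `x / 2`, so that the recurrences of the
Bessel and Struve functions are the same two statements about this series. -/
noncomputable def besselStruveSeries (α β : ℝ) (k : ℕ) (x : ℝ) : ℝ :=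
  ∑' m : ℕ, besselStruveCoeff α β m * (x / 2) ^ (2 * m + k)

theorem hasDerivAt_tsum_mul_pow {ι 𝕜 : Type*} [RCLike 𝕜] {c : ι → 𝕜} {e : ι → ℕ}
    (hc : ∀ r : ℝ, Summable fun i => ‖c i‖ * r ^ e i) (x : 𝕜) :
    HasDerivAt (fun y => ∑' i, c i * y ^ e i) (∑' i, c i * (e i * x ^ (e i - 1))) x := by
  set M : ℝ := ‖x‖ + 1
  have hM : 1 ≤ M := le_add_of_nonneg_left (norm_nonneg x)
  have hx : x ∈ Metric.ball (0 : 𝕜) M := by simp [M]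
  refine hasDerivAt_tsum_of_isPreconnected (hc (2 * M)) Metric.isOpen_ball
    (convex_ball (0 : 𝕜) M).isPreconnected
    (fun i y _ => (hasDerivAt_pow (e i) y).const_mul (c i)) (fun i y hy => ?_) hx ?_ hx
  · have hy : ‖y‖ ≤ M := (mem_ball_zero_iff.1 hy).le
    have hpow : ‖y‖ ^ (e i - 1) ≤ M ^ e i :=
      (pow_le_pow_left₀ (norm_nonneg y) hy _).trans (pow_le_pow_right₀ hM (Nat.sub_le _ _))
    have hexp : (e i : ℝ) ≤ 2 ^ e i := mod_cast Nat.lt_two_pow_self.le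
    rw [norm_mul, norm_mul, norm_pow, RCLike.norm_natCast, mul_pow]
    gcongr
  · exact .of_norm (by simpa only [norm_mul, norm_pow] using hc ‖x‖)

section BesselStruveSeries

variable {α β : ℝ}

theorem besselStruveCoeff_succ (hα : 0 < α) (hβ : 0 < β) (m : ℕ) :
    besselStruveCoeff α β (m + 1) = -besselStruveCoeff α β m / ((m + α) * (m + β)) := by
  have hα' : (m : ℝ) + α ≠ 0 := by positivity
  have hβ' : (m : ℝ) + β ≠ 0 := by positivity
  simp only [besselStruveCoeff, Nat.cast_add_one, add_right_comm _ (1 : ℝ), Gamma_add_one hα',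
    Gamma_add_one hβ', pow_succ]
  field_simp

theorem besselStruveCoeff_add_one_right (hβ : 0 < β) (m : ℕ) :
    (m + β) * besselStruveCoeff α (β + 1) m = besselStruveCoeff α β m := by
  have hβ' : (m : ℝ) + β ≠ 0 := by positivity
  rw [besselStruveCoeff, besselStruveCoeff, ← add_assoc, Gamma_add_one hβ']
  field_simp

theorem summable_norm_besselStruveCoeff_mul_pow (hα : 0 < α) (hβ : 0 < β) (k : ℕ) (r : ℝ) :
    Summable fun m => ‖besselStruveCoeff α β m‖ * r ^ (2 * m + k) := by
  refine summable_of_ratio_norm_eventually_le (r := 1 / 2) (by norm_num) ?_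
  filter_upwards [Filter.eventually_ge_atTop ⌈2 * r ^ 2⌉₊, Filter.eventually_ge_atTop 1]
    with m hm hm1
  have hm : 2 * r ^ 2 ≤ m := Nat.ceil_le.1 hm
  have hm1 : (1 : ℝ) ≤ m := mod_cast hm1
  have hratio : r ^ 2 / ((m + α) * (m + β)) ≤ 1 / 2 := by
    rw [div_le_iff₀ (by positivity)]
    nlinarith [mul_le_mul (hm.trans (le_add_of_nonneg_right hα.le))
      (hm1.trans (le_add_of_nonneg_right hβ.le)) zero_le_one (by positivity)]
  calc ‖‖besselStruveCoeff α β (m + 1)‖ * r ^ (2 * (m + 1) + k)‖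
      = r ^ 2 / ((m + α) * (m + β)) * ‖‖besselStruveCoeff α β m‖ * r ^ (2 * m + k)‖ := by
        rw [besselStruveCoeff_succ hα hβ, norm_mul, norm_mul, norm_norm, norm_norm, norm_div,
          norm_neg, norm_of_nonneg (by positivity : 0 ≤ (m + α) * (m + β)), norm_pow, norm_pow,
          show 2 * (m + 1) + k = 2 + (2 * m + k) by ring, pow_add, norm_eq_abs r, sq_abs]
        ring
    _ ≤ 1 / 2 * ‖‖besselStruveCoeff α β m‖ * r ^ (2 * m + k)‖ := by gcongr

theorem summable_besselStruveSeries (hα : 0 < α) (hβ : 0 < β) (k : ℕ) (x : ℝ) :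
    Summable fun m => besselStruveCoeff α β m * (x / 2) ^ (2 * m + k) :=
  .of_norm (by simpa only [norm_mul, norm_pow] using
    summable_norm_besselStruveCoeff_mul_pow hα hβ k ‖x / 2‖)

theorem pow_mul_besselStruveSeries (j k : ℕ) (x : ℝ) :
    x ^ j * besselStruveSeries α β k x = 2 ^ j * besselStruveSeries α β (k + j) x := by
  simp only [besselStruveSeries, ← tsum_mul_left]
  refine tsum_congr fun m => ?_
  rw [← add_assoc, pow_add _ _ j, div_pow x 2 j]
  field_simp

theorem hasDerivAt_besselStruveSeries (hα : 0 < α) (hβ : 0 < β) (k : ℕ) (x : ℝ) :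
    HasDerivAt (besselStruveSeries α β k)
      (∑' m : ℕ, (m + k / 2) * besselStruveCoeff α β m * (x / 2) ^ (2 * m + k - 1)) x := by
  have hseries := hasDerivAt_tsum_mul_pow
    (summable_norm_besselStruveCoeff_mul_pow hα hβ k) (x / 2)
  refine (hseries.comp x ((hasDerivAt_id x).div_const 2)).congr_deriv ?_
  rw [← tsum_mul_right]
  refine tsum_congr fun m => ?_
  push_cast
  ring

theorem hasDerivAt_besselStruveSeries_add_one_right (hα : 0 < α) (hβ : 0 < β) {k : ℕ}
    (hk : (k : ℝ) + 1 = 2 * β) (x : ℝ) :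
    HasDerivAt (besselStruveSeries α (β + 1) (k + 1)) (besselStruveSeries α β k x) x := by
  refine (hasDerivAt_besselStruveSeries hα (by positivity) (k + 1) x).congr_deriv ?_
  refine tsum_congr fun m => ?_
  rw [Nat.cast_add_one, hk, mul_div_cancel_left₀ β two_ne_zero, besselStruveCoeff_add_one_right hβ]
  rfl

theorem hasDerivAt_besselStruveSeries_of_add_two_eq (hα : 0 < α) (hβ : 0 < β) {k : ℕ}
    (hk : (k : ℝ) + 2 = 2 * α) (x : ℝ) :
    HasDerivAt (besselStruveSeries α β k)
      (k / 2 * besselStruveCoeff α β 0 * (x / 2) ^ (k - 1)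
        - besselStruveSeries α (β + 1) (k + 1) x) x := by
  refine (hasDerivAt_besselStruveSeries hα hβ k x).congr_deriv ?_
  have hterm (m : ℕ) : ((m + 1 : ℕ) + (k : ℝ) / 2) * besselStruveCoeff α β (m + 1)
      * (x / 2) ^ (2 * (m + 1) + k - 1) =
      -(besselStruveCoeff α (β + 1) m * (x / 2) ^ (2 * m + (k + 1))) := by
    have hα' : (m : ℝ) + α ≠ 0 := by positivity
    have hβ' : (m : ℝ) + β ≠ 0 := by positivity
    rw [besselStruveCoeff_succ hα hβ, ← besselStruveCoeff_add_one_right hβ,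
      show ((m + 1 : ℕ) + (k : ℝ) / 2) = m + α by push_cast; linarith,
      show 2 * (m + 1) + k - 1 = 2 * m + (k + 1) by omega]
    field_simp
  rw [Summable.tsum_eq_zero_add, tsum_congr hterm, tsum_neg]
  · simp [besselStruveSeries, sub_eq_add_neg]
  · rw [← summable_nat_add_iff 1]
    exact (summable_besselStruveSeries hα (by positivity) (k + 1) x).neg.congr
      fun m => (hterm m).symm

end BesselStruveSeries

theorem besselJ_eq_besselStruveSeries (i : ℕ) : besselJ i = besselStruveSeries 1 (i + 1) i := by
  funext x
  refine tsum_congr fun m => ?_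
  rw [besselStruveCoeff, Gamma_nat_eq_factorial, add_right_comm, add_assoc]

theorem struveH_eq_besselStruveSeries (i : ℕ) :
    struveH i = besselStruveSeries (3 / 2) (i + 3 / 2) (i + 1) := by
  funext x
  refine tsum_congr fun m => ?_
  rw [besselStruveCoeff, add_assoc (m : ℝ), add_assoc (2 * m)]

theorem continuous_besselJ (i : ℕ) : Continuous (besselJ i) := by
  rw [besselJ_eq_besselStruveSeries]
  exact continuous_iff_continuousAt.2 fun x =>
    (hasDerivAt_besselStruveSeries one_pos (by positivity) i x).continuousAt

theorem hasDerivAt_besselJ_zero (x : ℝ) : HasDerivAt (besselJ 0) (-besselJ 1 x) x := by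
  have h := hasDerivAt_besselStruveSeries_of_add_two_eq one_pos one_pos (k := 0) (by norm_num) x
  simpa [besselJ_eq_besselStruveSeries] using h

theorem hasDerivAt_struveH_zero (x : ℝ) : HasDerivAt (struveH 0) (2 / π - struveH 1 x) x := by
  have hΓ : Gamma (3 / 2) = √π / 2 := by
    rw [show (3 / 2 : ℝ) = 1 / 2 + 1 by norm_num, Gamma_add_one (by norm_num), Gamma_one_half_eq]
    ring
  have hcoeff : 1 / 2 * besselStruveCoeff (3 / 2) (3 / 2) 0 = 2 / π := by
    rw [besselStruveCoeff, Nat.cast_zero, zero_add, hΓ]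
    field_simp
    rw [sq_sqrt pi_nonneg]
  have h := hasDerivAt_besselStruveSeries_of_add_two_eq (α := 3 / 2) (β := 3 / 2) (k := 1)
    (by norm_num) (by norm_num) (by norm_num) x
  rw [Nat.cast_one, hcoeff, Nat.sub_self, pow_zero, mul_one, add_comm (3 / 2 : ℝ)] at h
  simpa [struveH_eq_besselStruveSeries] using h

theorem hasDerivAt_pow_mul_besselJ_succ (i : ℕ) (x : ℝ) :
    HasDerivAt (fun x => x ^ (i + 1) * besselJ (i + 1) x) (x ^ (i + 1) * besselJ i x) x := by
  simp only [besselJ_eq_besselStruveSeries, pow_mul_besselStruveSeries]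
  rw [add_right_comm i 1, Nat.cast_add_one]
  exact (hasDerivAt_besselStruveSeries_add_one_right one_pos (by positivity)
    (by push_cast; ring) x).const_mul _

theorem hasDerivAt_pow_mul_struveH_succ (i : ℕ) (x : ℝ) :
    HasDerivAt (fun x => x ^ (i + 1) * struveH (i + 1) x) (x ^ (i + 1) * struveH i x) x := by
  simp only [struveH_eq_besselStruveSeries, pow_mul_besselStruveSeries]
  rw [add_right_comm (i + 1) 1, Nat.cast_add_one, add_right_comm (i : ℝ)]
  exact (hasDerivAt_besselStruveSeries_add_one_right (by norm_num) (by positivity)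
    (by push_cast; ring) x).const_mul _

theorem hasDerivAt_mul_besselJ_struveH_sub (x : ℝ) :
    HasDerivAt (fun x => x * (besselJ 1 x * struveH 0 x - besselJ 0 x * struveH 1 x))
      (2 / π * (x * besselJ 1 x)) x := by
  have hxJ : HasDerivAt (fun x => x * besselJ 1 x) (x * besselJ 0 x) x := by
    simpa using hasDerivAt_pow_mul_besselJ_succ 0 x
  have hxH : HasDerivAt (fun x => x * struveH 1 x) (x * struveH 0 x) x := by
    simpa using hasDerivAt_pow_mul_struveH_succ 0 x
  have h := (hxJ.mul (hasDerivAt_struveH_zero x)).sub ((hasDerivAt_besselJ_zero x).mul hxH)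
  convert! h using 1
  · funext y
    simp only [Pi.mul_apply, Pi.sub_apply]
    ring
  · ring

theorem hasDerivAt_pow_mul_besselJ_succ_mul (i : ℕ) {q : ℝ} (hq : q ≠ 0) (r : ℝ) :
    HasDerivAt (fun r => r ^ (i + 1) * besselJ (i + 1) (q * r) / q)
      (r ^ (i + 1) * besselJ i (q * r)) r := by
  have h := ((hasDerivAt_pow_mul_besselJ_succ i (q * r)).comp r
    (hasDerivAt_const_mul q)).div_const (q ^ (i + 2))
  convert! h using 1
  · funext s
    simp only [Function.comp_apply]
    field_simp
    ring
  · field_simp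
    ring

theorem integral_pow_mul_besselJ_mul (i : ℕ) {q : ℝ} (hq : q ≠ 0) (R : ℝ) :
    ∫ r in (0 : ℝ)..R, r ^ (i + 1) * besselJ i (q * r) =
      R ^ (i + 1) * besselJ (i + 1) (q * R) / q := by
  have hcont := continuous_besselJ i
  rw [intervalIntegral.integral_eq_sub_of_hasDerivAt
    (fun r _ => hasDerivAt_pow_mul_besselJ_succ_mul i hq r)
    (Continuous.intervalIntegrable (by fun_prop) _ _)]
  simp

theorem integral_mul_besselJ_one_mul {q : ℝ} (hq : q ≠ 0) (R : ℝ) :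
    ∫ r in (0 : ℝ)..R, r * besselJ 1 (q * r) =
      π * R / (2 * q) * (besselJ 1 (q * R) * struveH 0 (q * R)
        - besselJ 0 (q * R) * struveH 1 (q * R)) := by
  have hderiv (r : ℝ) : HasDerivAt (fun r => π * r / (2 * q) *
      (besselJ 1 (q * r) * struveH 0 (q * r) - besselJ 0 (q * r) * struveH 1 (q * r)))
      (r * besselJ 1 (q * r)) r := by
    have h := ((hasDerivAt_mul_besselJ_struveH_sub (q * r)).comp r
      (hasDerivAt_const_mul q)).const_mul (π / (2 * q ^ 2))
    convert! h using 1
    · funext s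
      simp only [Function.comp_apply]
      field_simp
    · field_simp
  have hcont := continuous_besselJ 1
  rw [intervalIntegral.integral_eq_sub_of_hasDerivAt (fun r _ => hderiv r)
    (Continuous.intervalIntegrable (by fun_prop) _ _)]
  simp

theorem integral_mul_mul_besselJ_zero_mul {q : ℝ} (hq : q ≠ 0) (R : ℝ) {u u' : ℝ → ℝ}
    (hu : ∀ r ∈ Set.uIcc 0 R, HasDerivAt u (u' r) r) (hu' : IntervalIntegrable u' volume 0 R) :
    ∫ r in (0 : ℝ)..R, u r * (r * besselJ 0 (q * r)) =
      (u R * (R * besselJ 1 (q * R)) - ∫ r in (0 : ℝ)..R, u' r * (r * besselJ 1 (q * r))) / q := by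
  have hcont := continuous_besselJ 0
  have hv (r : ℝ) : HasDerivAt (fun r => r * besselJ 1 (q * r) / q) (r * besselJ 0 (q * r)) r := by
    simpa using hasDerivAt_pow_mul_besselJ_succ_mul 0 hq r
  rw [intervalIntegral.integral_mul_deriv_eq_deriv_mul hu (fun r _ => hv r) hu'
    (Continuous.intervalIntegrable (by fun_prop) _ _)]
  simp only [← mul_div_assoc, intervalIntegral.integral_div]
  ring

theorem integral_sq_sub_sq_mul_besselJ_zero_mul {q : ℝ} (hq : q ≠ 0) (R ℓ : ℝ) :
    ∫ r in (0 : ℝ)..R, ((r - ℓ) ^ 2 - (R - ℓ) ^ 2) * (r * besselJ 0 (q * r)) =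
      π * R * ℓ / q ^ 2 * (besselJ 1 (q * R) * struveH 0 (q * R)
        - besselJ 0 (q * R) * struveH 1 (q * R)) - 2 * R ^ 2 / q ^ 2 * besselJ 2 (q * R) := by
  have hcont := continuous_besselJ 1
  have hu (r : ℝ) : HasDerivAt (fun r => (r - ℓ) ^ 2 - (R - ℓ) ^ 2) (2 * (r - ℓ)) r := by
    simpa using (((hasDerivAt_id r).sub_const ℓ).pow 2).sub_const ((R - ℓ) ^ 2)
  have hsplit : ∫ r in (0 : ℝ)..R, 2 * (r - ℓ) * (r * besselJ 1 (q * r)) =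
      2 * (∫ r in (0 : ℝ)..R, r ^ 2 * besselJ 1 (q * r)) -
        2 * ℓ * ∫ r in (0 : ℝ)..R, r * besselJ 1 (q * r) := by
    rw [← intervalIntegral.integral_const_mul, ← intervalIntegral.integral_const_mul,
      ← intervalIntegral.integral_sub (Continuous.intervalIntegrable (by fun_prop) _ _)
        (Continuous.intervalIntegrable (by fun_prop) _ _)]
    exact intervalIntegral.integral_congr fun r _ => by ring
  rw [integral_mul_mul_besselJ_zero_mul hq R (fun r _ => hu r)
      (Continuous.intervalIntegrable (by fun_prop) _ _), hsplit,
    integral_pow_mul_besselJ_mul 1 hq, integral_mul_besselJ_one_mul hq]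
  field_simp
  ring

theorem integral_cos_pow_two_mul (m : ℕ) :
    ∫ θ in (-π)..π, cos θ ^ (2 * m) =
      2 * π * ((2 * m).factorial / (4 ^ m * (m.factorial : ℝ) ^ 2)) := by
  induction m with
  | zero => simp; ring
  | succ n ih =>
    rw [show 2 * (n + 1) = 2 * n + 2 by ring, integral_cos_pow, ih]
    simp only [sin_pi, sin_neg, Nat.factorial_succ]
    push_cast
    field_simp
    ring

theorem hasSum_integral_cos_mul_cos (t : ℝ) :
    HasSum (fun m : ℕ => ∫ θ in (-π)..π, (-1) ^ m * (t * cos θ) ^ (2 * m) / (2 * m).factorial)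
      (∫ θ in (-π)..π, cos (t * cos θ)) := by
  refine intervalIntegral.hasSum_integral_of_dominated_convergence
    (fun m _ => |t| ^ (2 * m) / (2 * m).factorial)
    (fun m => Continuous.aestronglyMeasurable (by fun_prop)) (fun m => .of_forall fun θ _ => ?_)
    (.of_forall fun θ _ => (summable_pow_div_factorial |t|).comp_injective
      (mul_right_injective₀ two_ne_zero))
    intervalIntegrable_const (.of_forall fun θ _ => hasSum_cos _)
  rw [norm_div, norm_mul, norm_pow, norm_pow, norm_neg, norm_one, one_pow, one_mul, norm_mul,
    RCLike.norm_natCast, norm_eq_abs, norm_eq_abs]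
  gcongr
  exact mul_le_of_le_one_right (abs_nonneg t) (abs_cos_le_one θ)

theorem integral_cos_mul_cos (t : ℝ) : ∫ θ in (-π)..π, cos (t * cos θ) = 2 * π * besselJ 0 t := by
  rw [← (hasSum_integral_cos_mul_cos t).tsum_eq, besselJ, ← tsum_mul_left]
  refine tsum_congr fun m => ?_
  have hterm (θ : ℝ) : (-1) ^ m * (t * cos θ) ^ (2 * m) / (2 * m).factorial =
      (-1) ^ m * t ^ (2 * m) / (2 * m).factorial * cos θ ^ (2 * m) := by ring
  simp only [hterm, intervalIntegral.integral_const_mul, integral_cos_pow_two_mul]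
  rw [Nat.cast_zero, add_zero, add_zero, Gamma_nat_eq_factorial, div_pow, pow_mul 2]
  field_simp
  norm_num

theorem intervalIntegral_eq_zero_of_antiperiodic {E : Type*} [NormedAddCommGroup E]
    [NormedSpace ℝ E] {f : ℝ → E} {c : ℝ} (hf : Function.Antiperiodic f c) (a : ℝ) :
    ∫ x in a..a + 2 * c, f x = 0 := by
  have : IsAddTorsionFree E := .of_isTorsionFree ℝ E
  refine self_eq_neg.1 ?_
  calc ∫ x in a..a + 2 * c, f x = ∫ x in a + c..a + c + 2 * c, f x :=
        hf.periodic_two_mul.intervalIntegral_add_eq a (a + c)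
    _ = ∫ x in a..a + 2 * c, f (x + c) := by
        rw [intervalIntegral.integral_comp_add_right, add_right_comm]
    _ = -∫ x in a..a + 2 * c, f x := by
        simp only [hf _, intervalIntegral.integral_neg]

theorem integral_sin_mul_cos (t : ℝ) : ∫ θ in (-π)..π, sin (t * cos θ) = 0 := by
  have hanti : Function.Antiperiodic (fun θ => sin (t * cos θ)) π := fun θ => by
    simp only [cos_add_pi, mul_neg, sin_neg]
  convert! intervalIntegral_eq_zero_of_antiperiodic hanti (-π) using 2
  ring

theorem integral_exp_neg_I_mul_cos (t : ℝ) :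
    ∫ θ in (-π)..π, Complex.exp (-(Complex.I * ↑(t * cos θ))) = ↑(2 * π * besselJ 0 t) := by
  have hexp (θ : ℝ) : Complex.exp (-(Complex.I * ↑(t * cos θ))) =
      ↑(cos (t * cos θ)) - ↑(sin (t * cos θ)) * Complex.I := by
    rw [← mul_neg, mul_comm, Complex.exp_mul_I, Complex.cos_neg, Complex.sin_neg,
      Complex.ofReal_cos, Complex.ofReal_sin, neg_mul, sub_eq_add_neg]
  simp only [hexp]
  rw [intervalIntegral.integral_sub (Continuous.intervalIntegrable (by fun_prop) _ _)
      (Continuous.intervalIntegrable (by fun_prop) _ _), intervalIntegral.integral_mul_const,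
    intervalIntegral.integral_ofReal, intervalIntegral.integral_ofReal, integral_sin_mul_cos,
    integral_cos_mul_cos, Complex.ofReal_zero, zero_mul, sub_zero]

theorem integral_exp_neg_I_mul_cos_sub (t φ : ℝ) :
    ∫ θ in (-π)..π, Complex.exp (-(Complex.I * ↑(t * cos (θ - φ)))) = ↑(2 * π * besselJ 0 t) := by
  have hper : Function.Periodic
      (fun θ : ℝ => Complex.exp (-(Complex.I * ↑(t * cos θ)))) (2 * π) := fun θ => by
    simp only [cos_add_two_pi]
  rw [← integral_exp_neg_I_mul_cos, intervalIntegral.integral_comp_sub_right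
    fun θ => Complex.exp (-(Complex.I * ↑(t * cos θ)))]
  convert! hper.intervalIntegral_add_eq (-π - φ) (-π) using 2 <;> ring

theorem exists_eq_sqrt_mul_cos_and_sin (a b : ℝ) :
    ∃ φ : ℝ, a = √(a ^ 2 + b ^ 2) * cos φ ∧ b = √(a ^ 2 + b ^ 2) * sin φ := by
  rw [← Complex.norm_eq_sqrt_sq_add_sq ⟨a, b⟩]
  exact ⟨Complex.arg ⟨a, b⟩, (Complex.norm_mul_cos_arg ⟨a, b⟩).symm,
    (Complex.norm_mul_sin_arg ⟨a, b⟩).symm⟩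

theorem integral_radial_mul_exp {f : ℝ → ℂ} (hf : IntegrableOn (fun r : ℝ => r * f r) (Set.Ioi 0))
    (a b : ℝ) :
    ∫ x : ℝ × ℝ, f √(x.1 ^ 2 + x.2 ^ 2) * Complex.exp (-(Complex.I * ↑(a * x.1 + b * x.2))) =
      2 * π * ∫ r in Set.Ioi (0 : ℝ), r * f r * besselJ 0 (√(a ^ 2 + b ^ 2) * r) := by
  obtain ⟨φ, ha, hb⟩ := exists_eq_sqrt_mul_cos_and_sin a b
  set q : ℝ := √(a ^ 2 + b ^ 2)
  have hpolar : ∀ p ∈ polarCoord.target,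
      p.1 • (f √((polarCoord.symm p).1 ^ 2 + (polarCoord.symm p).2 ^ 2) *
        Complex.exp (-(Complex.I * ↑(a * (polarCoord.symm p).1 + b * (polarCoord.symm p).2)))) =
      p.1 * f p.1 * Complex.exp (-(Complex.I * ↑(q * p.1 * cos (p.2 - φ)))) := by
    rintro ⟨r, θ⟩ ⟨hr : 0 < r, -⟩
    have hnorm : (r * cos θ) ^ 2 + (r * sin θ) ^ 2 = r ^ 2 := by
      rw [mul_pow, mul_pow, ← mul_add, cos_sq_add_sin_sq, mul_one]
    have hphase : a * (r * cos θ) + b * (r * sin θ) = q * r * cos (θ - φ) := by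
      rw [ha, hb, cos_sub]; ring
    simp only [polarCoord_symm_apply, hnorm, hphase, sqrt_sq hr.le, Complex.real_smul, mul_assoc]
  have hint : IntegrableOn (fun p : ℝ × ℝ => p.1 * f p.1 *
      Complex.exp (-(Complex.I * ↑(q * p.1 * cos (p.2 - φ))))) (Set.Ioi 0 ×ˢ Set.Ioo (-π) π) := by
    have hrad : IntegrableOn (fun p : ℝ × ℝ => p.1 * f p.1) (Set.Ioi 0 ×ˢ Set.Ioo (-π) π) := by
      rw [IntegrableOn, Measure.volume_eq_prod, ← Measure.prod_restrict]
      exact hf.comp_fst _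
    refine hrad.mul_bdd (c := 1) (Continuous.aestronglyMeasurable (by fun_prop))
      (.of_forall fun p => ?_)
    rw [← mul_neg, ← Complex.ofReal_neg, Complex.norm_exp_I_mul_ofReal]
  calc ∫ x : ℝ × ℝ, f √(x.1 ^ 2 + x.2 ^ 2) * Complex.exp (-(Complex.I * ↑(a * x.1 + b * x.2)))
      = ∫ p in Set.Ioi 0 ×ˢ Set.Ioo (-π) π, p.1 * f p.1 *
          Complex.exp (-(Complex.I * ↑(q * p.1 * cos (p.2 - φ)))) := by
        rw [← integral_comp_polarCoord_symm]
        exact setIntegral_congr_fun polarCoord.open_target.measurableSet hpolar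
    _ = ∫ r in Set.Ioi (0 : ℝ), r * f r *
          ∫ θ in Set.Ioo (-π) π, Complex.exp (-(Complex.I * ↑(q * r * cos (θ - φ)))) := by
        rw [Measure.volume_eq_prod, setIntegral_prod _ hint]
        simp only [integral_const_mul]
    _ = ∫ r in Set.Ioi (0 : ℝ), 2 * π * (r * f r * besselJ 0 (q * r)) := by
        simp only [← integral_Ioc_eq_integral_Ioo,
          ← intervalIntegral.integral_of_le (neg_le_self pi_nonneg),
          integral_exp_neg_I_mul_cos_sub]
        congr 1 with r
        push_cast
        ring
    _ = 2 * π * ∫ r in Set.Ioi (0 : ℝ), r * f r * besselJ 0 (q * r) := integral_const_mul _ _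

theorem potV2_eq_indicator (R ℓ : ℝ) (x : ℝ × ℝ) :
    potV2 R ℓ x =
      (Set.Iio R).indicator (fun r => (r - ℓ) ^ 2 - (R - ℓ) ^ 2) √(x.1 ^ 2 + x.2 ^ 2) := rfl

theorem potV2_eq_zero_of_notMem_square {L R : ℝ} (hRL : R ≤ L) (ℓ : ℝ) {x : ℝ × ℝ}
    (hx : x ∉ Set.Icc (-L) L ×ˢ Set.Icc (-L) L) : potV2 R ℓ x = 0 := by
  refine if_neg fun hlt => hx ⟨abs_le.1 ?_, abs_le.1 ?_⟩
  · exact (abs_le_sqrt (le_add_of_nonneg_right (sq_nonneg _))).trans (hlt.le.trans hRL)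
  · exact (abs_le_sqrt (le_add_of_nonneg_left (sq_nonneg _))).trans (hlt.le.trans hRL)

theorem integral_potV2_mul_exp {R : ℝ} (hR : 0 ≤ R) (ℓ a b : ℝ) :
    ∫ x, (potV2 R ℓ x : ℂ) * Complex.exp (-(Complex.I * ↑(a * x.1 + b * x.2))) =
      ↑(2 * π * ∫ r in (0 : ℝ)..R,
        ((r - ℓ) ^ 2 - (R - ℓ) ^ 2) * (r * besselJ 0 (√(a ^ 2 + b ^ 2) * r))) := by
  set f : ℝ → ℝ := (Set.Iio R).indicator fun r => (r - ℓ) ^ 2 - (R - ℓ) ^ 2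
  have hcut (g : ℝ → ℝ) : (fun r => r * f r * g r) =
      (Set.Iio R).indicator fun r => ((r - ℓ) ^ 2 - (R - ℓ) ^ 2) * (r * g r) := by
    funext r
    by_cases hr : r ∈ Set.Iio R
    · simp only [f, Set.indicator_of_mem hr]; ring
    · simp only [f, Set.indicator_of_notMem hr, mul_zero, zero_mul]
  have hf : IntegrableOn (fun r : ℝ => (r : ℂ) * (f r : ℂ)) (Set.Ioi 0) := by
    have h : IntegrableOn (fun r => r * f r * 1) (Set.Ioi 0) := by
      rw [hcut fun _ => 1, integrableOn_indicator_iff measurableSet_Iio]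
      exact (Continuous.integrableOn_Icc (a := 0) (b := R) (by fun_prop)).mono_set
        fun r hr => ⟨hr.2.le, hr.1.le⟩
    simpa [IntegrableOn] using h.ofReal (𝕜 := ℂ)
  have hradial : ∫ r in Set.Ioi 0, r * f r * besselJ 0 (√(a ^ 2 + b ^ 2) * r) =
      ∫ r in (0 : ℝ)..R,
        ((r - ℓ) ^ 2 - (R - ℓ) ^ 2) * (r * besselJ 0 (√(a ^ 2 + b ^ 2) * r)) := by
    rw [hcut fun r => besselJ 0 (√(a ^ 2 + b ^ 2) * r), setIntegral_indicator measurableSet_Iio,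
      Set.Ioi_inter_Iio, ← integral_Ioc_eq_integral_Ioo, ← intervalIntegral.integral_of_le hR]
  simp only [potV2_eq_indicator]
  rw [integral_radial_mul_exp hf a b, ← hradial, Complex.ofReal_mul, ← integral_complex_ofReal]
  push_cast
  rfl

theorem fourier_coefficient_formula_2D_general {L R : ℝ} (hR : 0 < R) (hRL : R ≤ L) (ℓ : ℝ)
    {κ₁ κ₂ : ℝ} (hκ : (κ₁, κ₂) ≠ (0, 0)) :
    letI z : ℝ := π * R * √(κ₁ ^ 2 + κ₂ ^ 2) / L
    (1 / (2 * (L : ℂ))) ^ 2 * ∫ x in Set.Icc (-L) L ×ˢ Set.Icc (-L) L, (potV2 R ℓ x : ℂ) *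
        Complex.exp (-(Complex.I * (π : ℂ) * ((κ₁ : ℂ) * (x.1 : ℂ) + (κ₂ : ℂ) * (x.2 : ℂ)) /
          (L : ℂ))) =
      (((π / L ^ 2) *
        ((π * R ^ 3 * ℓ / (2 * z ^ 2)) *
            (besselJ 1 z * struveH 0 z - besselJ 0 z * struveH 1 z) -
          (R ^ 4 / z ^ 2) * besselJ 2 z) : ℝ) : ℂ) := by
  have hL : 0 < L := hR.trans_le hRL
  have hκ_pos : 0 < κ₁ ^ 2 + κ₂ ^ 2 := by
    rw [Ne, Prod.mk.injEq, not_and_or] at hκ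
    rcases hκ with h | h <;> positivity
  set q : ℝ := √((π * κ₁ / L) ^ 2 + (π * κ₂ / L) ^ 2) with hq_def
  have hq : q = π * √(κ₁ ^ 2 + κ₂ ^ 2) / L := by
    rw [hq_def, show (π * κ₁ / L) ^ 2 + (π * κ₂ / L) ^ 2 = (π / L) ^ 2 * (κ₁ ^ 2 + κ₂ ^ 2) by ring,
      sqrt_mul (sq_nonneg _), sqrt_sq (by positivity), div_mul_eq_mul_div]
  have hq_ne : q ≠ 0 := by rw [hq]; positivity
  have hz : π * R * √(κ₁ ^ 2 + κ₂ ^ 2) / L = q * R := by rw [hq]; ring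
  have hphase (x : ℝ × ℝ) : Complex.I * (π : ℂ) * (κ₁ * x.1 + κ₂ * x.2) / L =
      Complex.I * ↑(π * κ₁ / L * x.1 + π * κ₂ / L * x.2) := by push_cast; ring
  rw [setIntegral_eq_integral_of_forall_compl_eq_zero fun x hx => by
    rw [potV2_eq_zero_of_notMem_square hRL ℓ hx, Complex.ofReal_zero, zero_mul]]
  simp only [hphase, hz]
  rw [integral_potV2_mul_exp hR.le, ← hq_def, integral_sq_sub_sq_mul_besselJ_zero_mul hq_ne]
  norm_cast
  field_simp

theorem fourier_coefficient_formula_2D (L R ℓ : ℝ) (hL : 0 < L) (hR : 0 < R) (hRL : R ≤ L)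
    (hℓ : 0 ≤ ℓ) (k₁ k₂ : ℤ) (hk : (k₁, k₂) ≠ (0, 0)) :
    letI z : ℝ := π * R * Real.sqrt ((k₁ : ℝ) ^ 2 + (k₂ : ℝ) ^ 2) / L
    Vhat2C L R ℓ k₁ k₂ =
      (((π / L ^ 2) *
        ((π * R ^ 3 * ℓ / (2 * z ^ 2)) *
            (besselJ 1 z * struveH 0 z - besselJ 0 z * struveH 1 z) -
          (R ^ 4 / z ^ 2) * besselJ 2 z) : ℝ) : ℂ) := by
  have hκ : ((k₁ : ℝ), (k₂ : ℝ)) ≠ (0, 0) := by simpa using hk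
  simpa only [Vhat2C, Complex.ofReal_intCast] using
    fourier_coefficient_formula_2D_general hR hRL ℓ hκ
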